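/- Let μ, λ ∈ ℝ with λ² > μ², and set k = √(λ² − μ²) > 0. Suppose φ : ℝ → ℂ² is differentiable, is not identically zero on [−1,1], satisfies −i·σ₂·φ'(t) + μ·σ₃·φ(t) = λ·φ(t) for all t ∈ [−1,1], and satisfies the infinite mass boundary conditions σ₁φ(−1) = φ(−1) and σ₁φ(1) = −φ(1). Then sin(2k) ≠ 0, μ·sin(2k) + k·cos(2k) = 0, and λ²·sin(2k)² = k². -/

import Mathlib

open Matrix Complex

/-- The Pauli matrix σ₁. -/
noncomputable def σ1 : Matrix (Fin 2) (Fin 2) ℂ := !![0, 1; 1, 0]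
/-- The Pauli matrix σ₂. -/
noncomputable def σ2 : Matrix (Fin 2) (Fin 2) ℂ := !![0, -Complex.I; Complex.I, 0]
/-- The Pauli matrix σ₃. -/
noncomputable def σ3 : Matrix (Fin 2) (Fin 2) ℂ := !![1, 0; 0, -1]

/-- Solutions of the system `du/dt = a v`, `dv/dt = -b u` with `a b = k²` on an interval `[t₀, t₁]`
have the first integrals given by rotating back to `t₀`. -/
theorem oscillator_first_integrals {a b k t₀ t₁ : ℝ} (hab : a * b = k ^ 2) {u v : ℝ → ℂ}
    (hu : ∀ t ∈ Set.Icc t₀ t₁, HasDerivAt u (a * v t) t)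
    (hv : ∀ t ∈ Set.Icc t₀ t₁, HasDerivAt v (-(b * u t)) t) :
    ∀ t ∈ Set.Icc t₀ t₁,
      k * Real.cos (k * (t - t₀)) * u t - a * Real.sin (k * (t - t₀)) * v t = k * u t₀ ∧
      k * Real.cos (k * (t - t₀)) * v t + b * Real.sin (k * (t - t₀)) * u t = k * v t₀ := by
  have habC : (a : ℂ) * b = k ^ 2 := by exact_mod_cast hab
  have hlin : ∀ t, HasDerivAt (fun t => k * (t - t₀)) k t := fun t => by
    simpa using ((hasDerivAt_id t).sub_const t₀).const_mul k
  have hcos := fun t => (hlin t).cos.ofReal_comp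
  have hsin := fun t => (hlin t).sin.ofReal_comp
  have hA : ∀ t ∈ Set.Icc t₀ t₁, HasDerivAt (fun t =>
      k * (Real.cos (k * (t - t₀)) : ℂ) * u t - a * (Real.sin (k * (t - t₀)) : ℂ) * v t) 0 t := by
    intro t ht
    refine ((((hcos t).const_mul (k : ℂ)).mul (hu t ht)).sub
      (((hsin t).const_mul (a : ℂ)).mul (hv t ht))).congr_deriv ?_
    push_cast
    linear_combination (Complex.sin (k * (t - t₀)) * u t) * habC
  have hB : ∀ t ∈ Set.Icc t₀ t₁, HasDerivAt (fun t =>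
      k * (Real.cos (k * (t - t₀)) : ℂ) * v t + b * (Real.sin (k * (t - t₀)) : ℂ) * u t) 0 t := by
    intro t ht
    refine ((((hcos t).const_mul (k : ℂ)).mul (hv t ht)).add
      (((hsin t).const_mul (b : ℂ)).mul (hu t ht))).congr_deriv ?_
    push_cast
    linear_combination (Complex.sin (k * (t - t₀)) * v t) * habC
  intro t ht
  constructor
  · simpa using constant_of_has_deriv_right_zero
      (fun x hx => (hA x hx).continuousAt.continuousWithinAt)
      (fun x hx => (hA x (Set.Ico_subset_Icc_self hx)).hasDerivWithinAt) t ht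
  · simpa using constant_of_has_deriv_right_zero
      (fun x hx => (hB x hx).continuousAt.continuousWithinAt)
      (fun x hx => (hB x (Set.Ico_subset_Icc_self hx)).hasDerivWithinAt) t ht

/-- Oscillatory case `k² = λ² − μ² > 0` of the transverse eigenvalue problem: a
nontrivial eigenfunction with the infinite mass boundary conditions forces the
dispersion relations `μ·sin(2k) + k·cos(2k) = 0` and `λ²·sin²(2k) = k²`. -/
theorem transverse_eigen_oscillatory (μ lam : ℝ) (hk : μ ^ 2 < lam ^ 2)
    (k : ℝ) (hkdef : k = Real.sqrt (lam ^ 2 - μ ^ 2))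
    (φ : ℝ → Fin 2 → ℂ) (hφ : Differentiable ℝ φ)
    (hne : ∃ t ∈ Set.Icc (-1 : ℝ) 1, φ t ≠ 0)
    (heig : ∀ t ∈ Set.Icc (-1 : ℝ) 1,
      (-Complex.I) • σ2.mulVec (deriv φ t) + (μ : ℂ) • σ3.mulVec (φ t)
        = (lam : ℂ) • φ t)
    (hbc1 : σ1.mulVec (φ (-1)) = φ (-1))
    (hbc2 : σ1.mulVec (φ 1) = -φ 1) :
    Real.sin (2 * k) ≠ 0 ∧
    μ * Real.sin (2 * k) + k * Real.cos (2 * k) = 0 ∧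
    lam ^ 2 * Real.sin (2 * k) ^ 2 = k ^ 2 := by
  have hk2 : k ^ 2 = lam ^ 2 - μ ^ 2 := by
    rw [hkdef, Real.sq_sqrt (by linarith)]
  have hk0 : k ≠ 0 := by
    rintro rfl
    nlinarith
  have hkC : (k : ℂ) ≠ 0 := by exact_mod_cast hk0
  have hk2C : (k : ℂ) ^ 2 = lam ^ 2 - μ ^ 2 := by exact_mod_cast hk2
  have hd : ∀ t i, HasDerivAt (fun t => φ t i) (deriv φ t i) t := fun t =>
    hasDerivAt_pi.1 (hφ t).hasDerivAt
  have hu : ∀ t ∈ Set.Icc (-1 : ℝ) 1,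
      HasDerivAt (fun t => φ t 0) (((lam + μ : ℝ) : ℂ) * φ t 1) t := by
    intro t ht
    refine (hd t 0).congr_deriv ?_
    have h := congrFun (heig t ht) 1
    simp [σ2, σ3, dotProduct, Fin.sum_univ_two, ← mul_assoc] at h
    push_cast
    linear_combination h
  have hv : ∀ t ∈ Set.Icc (-1 : ℝ) 1,
      HasDerivAt (fun t => φ t 1) (-(((lam - μ : ℝ) : ℂ) * φ t 0)) t := by
    intro t ht
    refine (hd t 1).congr_deriv ?_
    have h := congrFun (heig t ht) 0
    simp [σ2, σ3, dotProduct, Fin.sum_univ_two, ← mul_assoc] at h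
    push_cast
    linear_combination -h
  have hleft : φ (-1) 1 = φ (-1) 0 := by
    simpa [σ1, Matrix.mulVec, dotProduct, Fin.sum_univ_two] using congrFun hbc1 0
  have hright : φ 1 1 = -φ 1 0 := by
    simpa [σ1, Matrix.mulVec, dotProduct, Fin.sum_univ_two] using congrFun hbc2 0
  have hint := oscillator_first_integrals (k := k) (by rw [hk2]; ring) hu hv
  have hc : φ (-1) 0 ≠ 0 := by
    intro hc
    obtain ⟨t, ht, hφt⟩ := hne
    obtain ⟨hA, hB⟩ := hint t ht
    rw [hc, mul_zero] at hA
    rw [hleft, hc, mul_zero] at hB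
    have hsc : (Real.sin (k * (t - -1)) : ℂ) ^ 2 + (Real.cos (k * (t - -1)) : ℂ) ^ 2 = 1 := by
      exact_mod_cast Real.sin_sq_add_cos_sq (k * (t - -1))
    generalize (Real.sin (k * (t - -1)) : ℂ) = S at *
    generalize (Real.cos (k * (t - -1)) : ℂ) = C at *
    push_cast at hA hB
    have h0 : (k : ℂ) ^ 2 * φ t 0 = 0 := by
      linear_combination k * C * hA + (lam + μ) * S * hB - k ^ 2 * φ t 0 * hsc
        + S ^ 2 * φ t 0 * hk2C
    have h1 : (k : ℂ) ^ 2 * φ t 1 = 0 := by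
      linear_combination k * C * hB - (lam - μ) * S * hA - k ^ 2 * φ t 1 * hsc
        + S ^ 2 * φ t 1 * hk2C
    apply hφt
    ext i
    fin_cases i
    · simpa [hkC] using h0
    · simpa [hkC] using h1
  obtain ⟨hA, hB⟩ := hint 1 (by norm_num)
  rw [show k * (1 - -1) = 2 * k by ring, hright] at hA hB
  rw [hleft] at hB
  have hsc := Real.sin_sq_add_cos_sq (2 * k)
  generalize Real.sin (2 * k) = S at *
  generalize Real.cos (2 * k) = C at *
  push_cast at hA hB
  have hd0 : φ 1 0 ≠ 0 := by
    intro h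
    apply mul_ne_zero hkC hc
    rw [← hA, h]
    ring
  have hdisp : μ * S + k * C = 0 := by
    have h : φ 1 0 * ((μ : ℂ) * S + k * C) = 0 := by
      linear_combination (hA - hB) / 2
    exact_mod_cast (mul_eq_zero.1 h).resolve_left hd0
  refine ⟨?_, hdisp, ?_⟩
  · rintro rfl
    apply mul_ne_zero hkC hc
    push_cast at hA hB
    linear_combination -(hA + hB) / 2
  · linear_combination -S ^ 2 * hk2 + k ^ 2 * hsc + (μ * S - k * C) * hdisp
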